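/- Let J(x) = x·tanh x, J'(ξ) = tanh ξ + ξ(1 − tanh²ξ), Λ(ξ) = J'(ξ)² − 4J(ξ), and for ξ ≠ 0, η ≠ 0, ξ+η ≠ 0 set ζ = −(ξ+η), Ω = J(ξ)² + J(η)² + J(ζ)² − 2J(ξ)J(η) − 2J(η)J(ζ) − 2J(ζ)J(ξ), B^h(ξ,η) = −2iζ·J(ξ)·J(η)/Ω and C^h(ξ,η) = −iξηζ·(J(ζ) − J(ξ) − J(η))/Ω. Then for every fixed real ξ ≠ 0, as η → 0 through values with η ≠ 0 and ξ + η ≠ 0, one has B^h(ξ,η) → 2iξ·J(ξ)/Λ(ξ) and C^h(ξ,η) → iξ²·J'(ξ)/Λ(ξ). -/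

import Mathlib

open Filter Topology

noncomputable def J (x : ℝ) : ℝ := x * Real.tanh x

noncomputable def J' (ξ : ℝ) : ℝ := Real.tanh ξ + ξ * (1 - Real.tanh ξ ^ 2)

noncomputable def Λ (ξ : ℝ) : ℝ := J' ξ ^ 2 - 4 * J ξ

noncomputable def Ω (ξ η ζ : ℝ) : ℝ :=
  J ξ ^ 2 + J η ^ 2 + J ζ ^ 2 - 2 * J ξ * J η - 2 * J η * J ζ - 2 * J ζ * J ξ

noncomputable def Bh (ξ η : ℝ) : ℂ :=
  -2 * Complex.I * ((-(ξ + η) : ℝ) : ℂ) * (J ξ : ℂ) * (J η : ℂ) /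
    ((Ω ξ η (-(ξ + η)) : ℝ) : ℂ)

noncomputable def Ch (ξ η : ℝ) : ℂ :=
  -Complex.I * (ξ : ℂ) * (η : ℂ) * ((-(ξ + η) : ℝ) : ℂ) *
      ((J (-(ξ + η)) - J ξ - J η : ℝ) : ℂ) /
    ((Ω ξ η (-(ξ + η)) : ℝ) : ℂ)


lemma aux_hasDerivAt_tanh (x : ℝ) : HasDerivAt Real.tanh (1 - Real.tanh x ^ 2) x := by
  have hc : Real.cosh x ≠ 0 := (Real.cosh_pos x).ne'
  have h := (Real.hasDerivAt_sinh x).div (Real.hasDerivAt_cosh x) hc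
  have e : Real.tanh = Real.sinh / Real.cosh := by
    funext y; simp [Real.tanh_eq_sinh_div_cosh]
  rw [e]
  refine h.congr_deriv ?_
  simp only [Pi.div_apply]
  field_simp

lemma aux_hasDerivAt_J (x : ℝ) : HasDerivAt J (J' x) x := by
  have h := (hasDerivAt_id x).mul (aux_hasDerivAt_tanh x)
  have e : J = id * Real.tanh := by funext y; simp [J]
  rw [e]
  refine h.congr_deriv ?_
  simp [J']

lemma aux_J_neg (x : ℝ) : J (-x) = J x := by simp [J]

lemma aux_Λ_neg (x : ℝ) : Λ (-x) = Λ x := by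
  simp only [Λ, J', J, Real.tanh_neg]; ring

lemma aux_sinh_le (x : ℝ) (hx : 0 < x) : Real.sinh x ≤ x * Real.cosh x := by
  have hm : MonotoneOn (fun y : ℝ => y * Real.cosh y - Real.sinh y) (Set.Ici 0) := by
    apply monotoneOn_of_deriv_nonneg (convex_Ici 0)
    · fun_prop
    · fun_prop
    · intro y hy
      rw [interior_Ici] at hy
      have hy : 0 < y := hy
      have h : HasDerivAt (fun y : ℝ => y * Real.cosh y - Real.sinh y)
          (1 * Real.cosh y + y * Real.sinh y - Real.cosh y) y :=
        ((hasDerivAt_id' y).mul (Real.hasDerivAt_cosh y)).sub (Real.hasDerivAt_sinh y)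
      rw [h.deriv]
      have := mul_nonneg hy.le (Real.sinh_nonneg_iff.2 hy.le)
      linarith
  have := hm (Set.mem_Ici.2 le_rfl) (Set.mem_Ici.2 hx.le) hx.le
  simp at this
  exact this

lemma aux_Λ_pos (x : ℝ) (hx : 0 < x) : Λ x < 0 := by
  have hc := Real.cosh_pos x
  have hc1 := Real.one_le_cosh x
  have hs : x ≤ Real.sinh x := Real.self_le_sinh_iff.2 hx.le
  have hcs := Real.cosh_sq x
  have ht0 : 0 < Real.tanh x := by
    rw [Real.tanh_eq_sinh_div_cosh]; exact div_pos (by linarith) hc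
  have htx : Real.tanh x ≤ x := by
    rw [Real.tanh_eq_sinh_div_cosh, div_le_iff₀ hc]; exact aux_sinh_le x hx
  have ht1 : Real.tanh x < 1 := by
    rw [Real.tanh_eq_sinh_div_cosh, div_lt_one hc]; exact Real.sinh_lt_cosh x
  have hd : x * (1 - Real.tanh x ^ 2) ≤ Real.tanh x := by
    have e : 1 - Real.tanh x ^ 2 = 1 / Real.cosh x ^ 2 := by
      rw [Real.tanh_eq_sinh_div_cosh]; field_simp; linarith
    rw [e, Real.tanh_eq_sinh_div_cosh, mul_one_div, div_le_div_iff₀ (by positivity) hc]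
    have : x ≤ Real.sinh x * Real.cosh x := by nlinarith
    nlinarith
  unfold Λ J' J
  generalize Real.tanh x = t at *
  have h2 : t - x * (1 - t ^ 2) ≤ t ^ 3 := by nlinarith [mul_nonneg (sub_nonneg.2 htx) (by nlinarith : 0 ≤ 1 - t ^ 2)]
  have h3 : (t - x * (1 - t ^ 2)) ^ 2 ≤ (t ^ 3) ^ 2 := pow_le_pow_left₀ (by linarith) h2 2
  have ht3 : 0 < t ^ 3 := by positivity
  have h4 : t ^ 3 ≤ t := by
    have := pow_le_of_le_one ht0.le ht1.le (n := 3) (by norm_num)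
    exact this
  have h5 : t ^ 3 * t ^ 3 ≤ t ^ 3 * x := mul_le_mul_of_nonneg_left (by linarith) ht3.le
  have h6 : 0 < t ^ 3 * x := by positivity
  nlinarith

lemma aux_Λ_ne (x : ℝ) (hx : x ≠ 0) : Λ x ≠ 0 := by
  rcases lt_or_gt_of_ne hx with h | h
  · rw [← aux_Λ_neg]; exact (aux_Λ_pos (-x) (by linarith)).ne
  · exact (aux_Λ_pos x h).ne

/-- Boundary values of the holomorphic normal-form symbols `B^h`, `C^h` on the
line `η = 0`. -/
theorem Bh_Ch_limits_eta_zero (ξ : ℝ) (hξ : ξ ≠ 0) :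
    Tendsto (fun η : ℝ => Bh ξ η) (𝓝[{η : ℝ | η ≠ 0 ∧ ξ + η ≠ 0}] (0 : ℝ))
        (𝓝 (2 * Complex.I * (ξ : ℂ) * (J ξ : ℂ) / ((Λ ξ : ℝ) : ℂ))) ∧
      Tendsto (fun η : ℝ => Ch ξ η) (𝓝[{η : ℝ | η ≠ 0 ∧ ξ + η ≠ 0}] (0 : ℝ))
        (𝓝 (Complex.I * (ξ : ℂ) ^ 2 * (J' ξ : ℂ) / ((Λ ξ : ℝ) : ℂ))) := by
  have hΛ := aux_Λ_ne ξ hξ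
  set S : Set ℝ := {η : ℝ | η ≠ 0 ∧ ξ + η ≠ 0} with hS
  have hle : 𝓝[S] (0 : ℝ) ≤ 𝓝[≠] 0 := nhdsWithin_mono _ (fun y hy => hy.1)
  have hmem : ∀ᶠ η in 𝓝[S] (0 : ℝ), η ≠ 0 := by
    filter_upwards [self_mem_nhdsWithin] with y hy using hy.1
  have hid : Tendsto (fun η : ℝ => η) (𝓝[S] (0 : ℝ)) (𝓝 0) := tendsto_nhdsWithin_of_tendsto_nhds tendsto_id
  -- difference quotient of `J` at `ξ`
  have hD : Tendsto (fun η : ℝ => η⁻¹ * (J (ξ + η) - J ξ)) (𝓝[S] (0 : ℝ)) (𝓝 (J' ξ)) :=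
    ((hasDerivAt_iff_tendsto_slope_zero.1 (aux_hasDerivAt_J ξ)).mono_left hle)
  -- `tanh η / η → 1`
  have hT : Tendsto (fun η : ℝ => η⁻¹ * Real.tanh η) (𝓝[S] (0 : ℝ)) (𝓝 1) := by
    have := ((hasDerivAt_iff_tendsto_slope_zero.1 (aux_hasDerivAt_tanh 0)).mono_left hle)
    simpa using this
  have hT0 : Tendsto (fun η : ℝ => Real.tanh η) (𝓝[S] (0 : ℝ)) (𝓝 0) := by
    have := (aux_hasDerivAt_tanh 0).continuousAt.tendsto
    rw [Real.tanh_zero] at this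
    exact tendsto_nhdsWithin_of_tendsto_nhds this
  have hZ : Tendsto (fun η : ℝ => J (ξ + η)) (𝓝[S] (0 : ℝ)) (𝓝 (J ξ)) := by
    have h1 : Tendsto (fun η : ℝ => ξ + η) (𝓝[S] (0 : ℝ)) (𝓝 ξ) := by
      simpa using hid.const_add ξ
    exact (aux_hasDerivAt_J ξ).continuousAt.tendsto.comp h1
  have hsum : Tendsto (fun η : ℝ => -(ξ + η)) (𝓝[S] (0 : ℝ)) (𝓝 (-ξ)) := by
    simpa using (hid.const_add ξ).neg
  have hΩ : Tendsto (fun η : ℝ => (η⁻¹ * (J (ξ + η) - J ξ)) ^ 2 + Real.tanh η ^ 2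
      - 2 * (η⁻¹ * Real.tanh η) * (J ξ + J (ξ + η))) (𝓝[S] (0 : ℝ)) (𝓝 (Λ ξ)) := by
    have := ((hD.pow 2).add (hT0.pow 2)).sub ((hT.const_mul 2).mul (hZ.const_add (J ξ)))
    convert this using 2
    simp only [Λ]; ring
  have hΩe : ∀ η : ℝ, η ≠ 0 → Ω ξ η (-(ξ + η)) = η ^ 2 * ((η⁻¹ * (J (ξ + η) - J ξ)) ^ 2
      + Real.tanh η ^ 2 - 2 * (η⁻¹ * Real.tanh η) * (J ξ + J (ξ + η))) := by
    intro η h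
    have hJ : J η = η * Real.tanh η := rfl
    simp only [Ω, aux_J_neg, hJ]
    field_simp
    ring
  have hBr : Tendsto (fun η : ℝ => -2 * -(ξ + η) * J ξ * J η / Ω ξ η (-(ξ + η)))
      (𝓝[S] (0 : ℝ)) (𝓝 (2 * ξ * J ξ / Λ ξ)) := by
    have h := (((hsum.const_mul (-2)).mul_const (J ξ)).mul hT).div hΩ hΛ
    have e : -2 * -ξ * J ξ * 1 / Λ ξ = 2 * ξ * J ξ / Λ ξ := by ring
    rw [e] at h
    refine h.congr' ?_
    filter_upwards [hmem] with η hη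
    have hJ : J η = η ^ 2 * (η⁻¹ * Real.tanh η) := by simp only [J]; field_simp
    rw [hΩe η hη, hJ]
    have h2 : η ^ 2 ≠ 0 := pow_ne_zero 2 hη
    rw [Pi.div_apply, ← mul_div_mul_left _ _ h2]
    congr 1
    ring
  have hCr : Tendsto (fun η : ℝ => -ξ * η * -(ξ + η) * (J (-(ξ + η)) - J ξ - J η) /
      Ω ξ η (-(ξ + η))) (𝓝[S] (0 : ℝ)) (𝓝 (ξ ^ 2 * J' ξ / Λ ξ)) := by
    have h := ((hsum.const_mul (-ξ)).mul (hD.sub hT0)).div hΩ hΛ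
    have e : -ξ * -ξ * (J' ξ - 0) / Λ ξ = ξ ^ 2 * J' ξ / Λ ξ := by ring
    rw [e] at h
    refine h.congr' ?_
    filter_upwards [hmem] with η hη
    have hJ : J (-(ξ + η)) - J ξ - J η = η * (η⁻¹ * (J (ξ + η) - J ξ) - Real.tanh η) := by
      have hJ' : J η = η * Real.tanh η := rfl
      rw [aux_J_neg, hJ']; field_simp
    rw [hΩe η hη, hJ]
    have h2 : η ^ 2 ≠ 0 := pow_ne_zero 2 hη
    rw [Pi.div_apply, ← mul_div_mul_left _ _ h2]
    congr 1
    ring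
  constructor
  · have h := ((Complex.continuous_ofReal.tendsto _).comp hBr).const_mul Complex.I
    convert h using 2
    · simp only [Bh, Function.comp]; push_cast; ring
    · push_cast; ring
  · have h := ((Complex.continuous_ofReal.tendsto _).comp hCr).const_mul Complex.I
    convert h using 2
    · simp only [Ch, Function.comp]; push_cast; ring
    · push_cast; ring
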